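/- Let (G,C) be a strongly connected inhomogeneous Mauldin–Williams graph in ℝ^d satisfying the SCOSC and let s₀ = s₀(G). Then for every pair of vertices i, j ∈ V there exist constants c > 0, a > 0 and ρ ∈ (0,1) such that for every k ∈ ℕ and every t > 0 with a·ρ^{k+1} ≤ e^{−t} < a·ρ^k, one has e^{−s₀t} N_{e^{−t}}(K_j^C) ≥ c · Σ_{ℓ=0}^{k} ρ^{ℓs₀} N_{ρ^ℓ}(C_i). -/

import Mathlib

open Set Filter Topology MeasureTheory Metric

noncomputable section

/-- Points of `ℝ^d`. -/
abbrev Pt (d : ℕ) := EuclideanSpace ℝ (Fin d)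

/-- The `r`-covering number of `A ⊆ ℝ^d`: the least number of closed balls of
radius `r` needed to cover `A`. -/
noncomputable def coveringNumber {d : ℕ} (A : Set (Pt d)) (r : ℝ) : ℕ :=
  sInf {k : ℕ | ∃ c : Fin k → Pt d, A ⊆ ⋃ i, Metric.closedBall (c i) r}

/-- A Mauldin–Williams graph in `ℝ^d` over a finite directed multigraph with
vertex type `V` and edge type `E`: each vertex `i` carries a non-empty compact
set `X i` equal to the closure of its interior, and each edge `e` carries a
contractive similarity `S e` of ratio `r e ∈ (0,1)` mapping `X (term e)` into
`X (init e)`. -/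
structure MWGraph (d : ℕ) (V E : Type) [Fintype V] [Fintype E] where
  init : E → V
  term : E → V
  X : V → Set (Pt d)
  S : E → Pt d → Pt d
  r : E → ℝ
  X_nonempty : ∀ i, (X i).Nonempty
  X_compact : ∀ i, IsCompact (X i)
  X_regular : ∀ i, closure (interior (X i)) = X i
  r_pos : ∀ e, 0 < r e
  r_lt_one : ∀ e, r e < 1
  S_maps : ∀ e, Set.MapsTo (S e) (X (term e)) (X (init e))
  S_sim : ∀ e x y, dist (S e x) (S e y) = r e * dist x y

namespace MWGraph

variable {d : ℕ} {V E : Type} [Fintype V] [Fintype E]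

variable (G : MWGraph d V E)

/-- `G.IsPathFrom j γ` holds iff the list of edges `γ` is a directed path
starting at vertex `j`. -/
def IsPathFrom : V → List E → Prop
  | _, [] => True
  | j, e :: es => G.init e = j ∧ IsPathFrom (G.term e) es

/-- Terminal vertex of the path `γ` starting at `j`. -/
def pathTerm : V → List E → V
  | j, [] => j
  | _, e :: es => pathTerm (G.term e) es

/-- `S_γ = S_{e₁} ∘ ⋯ ∘ S_{eₙ}` (with `S_∅ = id`). -/
def pathMap : List E → Pt d → Pt d
  | [] => id
  | e :: es => G.S e ∘ pathMap es

/-- `r_γ = r_{e₁} ⋯ r_{eₙ}` (with `r_∅ = 1`). -/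
def pathRatio (γ : List E) : ℝ := (γ.map G.r).prod

/-- The underlying multigraph is strongly connected: for every ordered pair of
vertices there is a (non-empty) directed path from the first to the second. -/
def StronglyConnected : Prop :=
  ∀ i j : V, ∃ γ : List E, γ ≠ [] ∧ G.IsPathFrom i γ ∧ G.pathTerm i γ = j

/-- `K` is the list of graph-directed self-similar sets of `G`: the unique list
of non-empty compact sets with `K i = ⋃_{e ∈ E_i} S_e (K (term e))`. -/
def IsAttractor (K : V → Set (Pt d)) : Prop :=
  (∀ i, IsCompact (K i)) ∧ (∀ i, (K i).Nonempty) ∧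
    ∀ i, K i = ⋃ e ∈ {e : E | G.init e = i}, G.S e '' K (G.term e)

/-- `C` is an admissible list of condensation sets: compact subsets of the `X i`. -/
def IsCondensation (C : V → Set (Pt d)) : Prop :=
  ∀ i, IsCompact (C i) ∧ C i ⊆ G.X i

/-- `K` is the list of inhomogeneous graph-directed self-similar sets of `(G, C)`:
the unique list of non-empty compact sets with
`K i = ⋃_{e ∈ E_i} S_e (K (term e)) ∪ C i`. -/
def IsInhomAttractor (C : V → Set (Pt d)) (K : V → Set (Pt d)) : Prop :=
  (∀ i, IsCompact (K i)) ∧ (∀ i, (K i).Nonempty) ∧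
    ∀ i, K i = (⋃ e ∈ {e : E | G.init e = i}, G.S e '' K (G.term e)) ∪ C i

/-- `G` satisfies the open set condition with the open sets `U`. -/
def IsOSCWith (U : V → Set (Pt d)) : Prop :=
  (∀ i, (U i).Nonempty) ∧ (∀ i, IsOpen (U i)) ∧ (∀ i, Bornology.IsBounded (U i)) ∧
    (∀ i, U i ⊆ G.X i) ∧
    (∀ i, (⋃ e ∈ {e : E | G.init e = i}, G.S e '' U (G.term e)) ⊆ U i) ∧
    ∀ e e' : E, G.init e = G.init e' → e ≠ e' →
      Disjoint (G.S e '' U (G.term e)) (G.S e' '' U (G.term e'))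

/-- The set `{-log r_γ : γ a directed cycle of G}`. -/
def cycleSet : Set ℝ :=
  {x : ℝ | ∃ (j : V) (γ : List E), γ ≠ [] ∧ G.IsPathFrom j γ ∧ G.pathTerm j γ = j ∧
    x = -Real.log (G.pathRatio γ)}

/-- `G_M`, the smallest closed additive subgroup of `ℝ` containing
`{-log r_γ : γ a directed cycle}`. -/
def GM : Set ℝ := closure ((AddSubgroup.closure (G.cycleSet) : AddSubgroup ℝ) : Set ℝ)

variable [DecidableEq V]

/-- The matrix `A_G^s` with entries `(A_G^s)_{ij} = Σ_{e ∈ E_{ij}} r_e^s`. -/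
def Amatrix (s : ℝ) : Matrix V V ℝ :=
  Matrix.of fun i j => ∑ e : E, if G.init e = i ∧ G.term e = j then G.r e ^ s else 0

end MWGraph

/-- Spectral radius of a real square matrix: the largest modulus of a complex
eigenvalue. -/
noncomputable def matrixSpectralRadius {n : Type} [Fintype n] [DecidableEq n]
    (A : Matrix n n ℝ) : ℝ :=
  sSup {x : ℝ | ∃ μ : ℂ, μ ∈ spectrum ℂ (A.map (fun a : ℝ => (a : ℂ))) ∧ x = ‖μ‖}

/-- `s` is the (unique) exponent `s ≥ 0` with `ρ(A_G^s) = 1`, i.e. `s = s₀(G)`. -/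
def IsS0 {d : ℕ} {V E : Type} [Fintype V] [Fintype E] [DecidableEq V]
    (G : MWGraph d V E) (s : ℝ) : Prop :=
  0 ≤ s ∧ matrixSpectralRadius (G.Amatrix s) = 1

/-
At the critical exponent the moduli of an eigenvector of `A_G^s` form a non-zero vector `h ≥ 0` with
`h ≤ A_G^s h`. Unfolding this inequality along the path tree, from a vertex `v` with `h v > 0`,
shows that at least `c τ^{-s}` paths from `v` have ratio about `τ`. By the strong open set condition
and strong connectivity, each of these paths can be prolonged by a bounded amount so as to end at
`i` with its cylinder set deep inside the open set of the original path. Each prolonged path then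
carries a copy of `C_i`, and the copies obtained for `τ = 1, ρ, …, ρ^k` are pairwise further apart
than `2 ρ^{k+1}`, because `C` avoids the first-level images of the open sets. No ball of radius
`r ≤ ρ^{k+1}` meets two copies, so their covering numbers add up to at most that of the set at `v`,
and the copies at scale `ρ^m` contribute at least `c ρ^{-ms} N_{ρ^{k-m}}(C_i)`. Finally, a path from
`j` to `v` embeds a copy of the set at `v` in the set at `j`.
-/

section RealInequalities

lemma exists_pos_le_one_forall_le {ι : Type*} [Finite ι] {f : ι → ℝ} (hf : ∀ i, 0 < f i) :
    ∃ ε : ℝ, 0 < ε ∧ ε ≤ 1 ∧ ∀ i, ε ≤ f i := by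
  obtain ⟨ε, hε, hεf⟩ := Pi.exists_forall_pos_add_lt hf
  exact ⟨min ε 1, lt_min hε one_pos, min_le_right _ _,
    fun i => (min_le_left _ _).trans (by simpa using (hεf i).le)⟩

lemma rpow_abs_mul_rpow_le_rpow {b x y : ℝ} (hb : 0 < b) (hx : 0 < x) (hy : 0 < y)
    (hbx : b * x ≤ y) (hby : b * y ≤ x) (s : ℝ) : b ^ |s| * x ^ s ≤ y ^ s := by
  rcases le_total 0 s with hs | hs
  · rw [abs_of_nonneg hs, ← Real.mul_rpow hb.le hx.le]
    exact Real.rpow_le_rpow (by positivity) hbx hs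
  · rw [abs_of_nonpos hs, Real.rpow_neg hb.le, inv_mul_eq_div, ← Real.div_rpow hx.le hb.le]
    exact Real.rpow_le_rpow_of_nonpos hy ((le_div_iff₀' hb).2 hby) hs

lemma rpow_abs_mul_rpow_mul_rpow_pow_le_rpow {a ρ r : ℝ} (ha : 0 < a) (hρ0 : 0 < ρ)
    (hρ1 : ρ < 1) {k : ℕ} (hlow : a * ρ ^ (k + 1) ≤ r) (hup : r < a * ρ ^ k) (s : ℝ) :
    ρ ^ |s| * a ^ s * (ρ ^ s) ^ k ≤ r ^ s := by
  have hr : 0 < r := (mul_pos ha (pow_pos hρ0 _)).trans_le hlow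
  rw [Real.rpow_pow_comm hρ0.le, mul_assoc, ← Real.mul_rpow ha.le (pow_nonneg hρ0.le k)]
  refine rpow_abs_mul_rpow_le_rpow hρ0 (hr.trans hup) hr ?_
    ((mul_le_of_le_one_left hr.le hρ1.le).trans hup.le) s
  calc ρ * (a * ρ ^ k) = a * ρ ^ (k + 1) := by ring
    _ ≤ r := hlow

lemma mul_sum_pow_mul_le_pow_mul_sum {c x : ℝ} (hx : 0 ≤ x) {n N : ℕ → ℝ} (hN : ∀ ℓ, 0 ≤ N ℓ)
    (hn : ∀ m, c ≤ n m * x ^ m) (k : ℕ) :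
    c * ∑ ℓ ∈ Finset.range (k + 1), x ^ ℓ * N ℓ ≤
      x ^ k * ∑ m ∈ Finset.range (k + 1), n m * N (k - m) := by
  rw [← Finset.sum_flip, Finset.mul_sum, Finset.mul_sum]
  refine Finset.sum_le_sum fun m hm => ?_
  have hmk : m + (k - m) = k := Nat.add_sub_cancel' (Finset.mem_range_succ_iff.1 hm)
  calc c * (x ^ (k - m) * N (k - m)) ≤ n m * x ^ m * (x ^ (k - m) * N (k - m)) :=
        mul_le_mul_of_nonneg_right (hn m) (mul_nonneg (pow_nonneg hx _) (hN _))
    _ = x ^ (m + (k - m)) * (n m * N (k - m)) := by ring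
    _ = x ^ k * (n m * N (k - m)) := by rw [hmk]

end RealInequalities

section SpectralRadius

variable {n : Type} [Fintype n] [DecidableEq n] {A : Matrix n n ℝ}

lemma exists_mem_spectrum_norm_eq_matrixSpectralRadius (hA : 0 < matrixSpectralRadius A) :
    ∃ μ ∈ spectrum ℂ (A.map (fun a : ℝ => (a : ℂ))), ‖μ‖ = matrixSpectralRadius A := by
  let M : Matrix n n ℂ := A.map (fun a : ℝ => (a : ℂ))
  have hfinite : {x : ℝ | ∃ μ : ℂ, μ ∈ spectrum ℂ M ∧ x = ‖μ‖}.Finite :=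
    (M.finite_spectrum.image norm).subset fun x ⟨μ, hμ, hx⟩ => ⟨μ, hμ, hx.symm⟩
  have hnonempty : {x : ℝ | ∃ μ : ℂ, μ ∈ spectrum ℂ M ∧ x = ‖μ‖}.Nonempty := by
    refine nonempty_iff_ne_empty.2 fun hempty => hA.ne' ?_
    rw [matrixSpectralRadius, hempty, Real.sSup_empty]
  obtain ⟨μ, hμ, hsup⟩ := hnonempty.csSup_mem hfinite
  exact ⟨μ, hμ, hsup.symm⟩

/- Take the moduli of the coordinates of an eigenvector of maximal eigenvalue, and apply the
triangle inequality to the eigenvalue equation. -/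
lemma exists_pos_le_mulVec (hA : ∀ i j, 0 ≤ A i j) (hρ : 1 ≤ matrixSpectralRadius A) :
    ∃ h : n → ℝ, 0 < h ∧ h ≤ A.mulVec h := by
  obtain ⟨μ, hμ, hμρ⟩ :=
    exists_mem_spectrum_norm_eq_matrixSpectralRadius (zero_lt_one.trans_le hρ)
  rw [← Matrix.spectrum_toLin', ← Module.End.hasEigenvalue_iff_mem_spectrum] at hμ
  obtain ⟨x, hx⟩ := hμ.exists_hasEigenvector
  have hμx : ∀ i, ∑ j, (A i j : ℂ) * x j = μ * x i := fun i => by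
    simpa [Matrix.toLin'_apply, Matrix.mulVec, dotProduct] using congrFun hx.apply_eq_smul i
  refine ⟨fun i => ‖x i‖, Pi.lt_def.2 ⟨fun i => norm_nonneg _, ?_⟩, fun i => ?_⟩
  · obtain ⟨i, hi⟩ := Function.ne_iff.1 hx.2
    exact ⟨i, norm_pos_iff.2 hi⟩
  · calc ‖x i‖ ≤ ‖μ‖ * ‖x i‖ := le_mul_of_one_le_left (norm_nonneg _) (hρ.trans_eq hμρ.symm)
      _ = ‖∑ j, (A i j : ℂ) * x j‖ := by rw [hμx, norm_mul]
      _ ≤ ∑ j, ‖(A i j : ℂ) * x j‖ := norm_sum_le _ _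
      _ = ∑ j, A i j * ‖x j‖ := by simp only [norm_mul, Complex.norm_of_nonneg (hA i _)]

end SpectralRadius

section Similarity

variable {F : Type*} [NormedAddCommGroup F] [NormedSpace ℝ F] [StrictConvexSpace ℝ F]
  [FiniteDimensional ℝ F] {f : F → F} {q : ℝ}

lemma surjective_of_dist_eq_mul (hq : 0 < q) (hf : ∀ x y, dist (f x) (f y) = q * dist x y) :
    Function.Surjective f := by
  have hisometry : Isometry fun x => q⁻¹ • f x := by
    refine Isometry.of_dist_eq fun x y => ?_
    rw [dist_smul₀, hf, Real.norm_of_nonneg (inv_nonneg.2 hq.le), inv_mul_cancel_left₀ hq.ne']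
  have : Inhabited F := ⟨0⟩
  have hsurj : Function.Surjective fun x => q⁻¹ • f x :=
    (hisometry.affineIsometryOfStrictConvexSpace.toAffineIsometryEquiv rfl).surjective
  intro y
  obtain ⟨x, hx⟩ := hsurj (q⁻¹ • y)
  exact ⟨x, smul_right_injective _ (inv_ne_zero hq.ne') hx⟩

lemma isHomeomorph_of_dist_eq_mul (hq : 0 < q) (hf : ∀ x y, dist (f x) (f y) = q * dist x y) :
    IsHomeomorph f := by
  let D : F →ᵈ F := Dilation.mkOfDistEq f ⟨⟨q, hq.le⟩, NNReal.coe_ne_zero.1 hq.ne', hf⟩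
  exact isHomeomorph_iff_isEmbedding_surjective.2
    ⟨Dilation.isEmbedding D, surjective_of_dist_eq_mul hq hf⟩

end Similarity

section CoveringNumber

variable {d : ℕ} {A B : Set (Pt d)} {r : ℝ}

lemma exists_subset_iUnion_closedBall_coveringNumber (hA : Bornology.IsBounded A) (hr : 0 < r) :
    ∃ c : Fin (coveringNumber A r) → Pt d, A ⊆ ⋃ i, closedBall (c i) r := by
  suffices h : {k : ℕ | ∃ c : Fin k → Pt d, A ⊆ ⋃ i, closedBall (c i) r}.Nonempty from
    Nat.sInf_mem h
  obtain ⟨t, -, htfin, hcover⟩ :=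
    exists_finite_cover_balls_of_isCompact_closure hA.isCompact_closure hr
  refine
    ⟨htfin.toFinset.card, fun n => (htfin.toFinset.equivFin.symm n : Pt d), fun x hx => ?_⟩
  obtain ⟨y, hy, hxy⟩ := mem_iUnion₂.1 (hcover hx)
  exact mem_iUnion.2 ⟨htfin.toFinset.equivFin ⟨y, htfin.mem_toFinset.2 hy⟩,
    by simpa using ball_subset_closedBall hxy⟩

lemma coveringNumber_le_card {ι : Type*} (s : Finset ι) (c : ι → Pt d)
    (h : A ⊆ ⋃ i ∈ s, closedBall (c i) r) : coveringNumber A r ≤ s.card := by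
  refine Nat.sInf_le ⟨fun n => c (s.equivFin.symm n), fun x hx => ?_⟩
  obtain ⟨i, hi, hxi⟩ := mem_iUnion₂.1 (h hx)
  exact mem_iUnion.2 ⟨s.equivFin ⟨i, hi⟩, by simpa using hxi⟩

lemma coveringNumber_le_of_mapsTo_of_dist_eq_mul {f : Pt d → Pt d} {q r' : ℝ} (hq : 0 < q)
    (hf : ∀ x y, dist (f x) (f y) = q * dist x y) (hAB : MapsTo f A B)
    (hB : Bornology.IsBounded B) (hr : 0 < r) (hrr' : r ≤ q * r') :
    coveringNumber A r' ≤ coveringNumber B r := by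
  obtain ⟨c, hc⟩ := exists_subset_iUnion_closedBall_coveringNumber hB hr
  choose g hg using surjective_of_dist_eq_mul hq hf
  refine Nat.sInf_le ⟨fun n => g (c n), fun x hx => ?_⟩
  obtain ⟨n, hn⟩ := mem_iUnion.1 (hc (hAB hx))
  refine mem_iUnion.2 ⟨n, mem_closedBall.2 (le_of_mul_le_mul_left ?_ hq)⟩
  calc q * dist x (g (c n)) = dist (f x) (c n) := by rw [← hf, hg]
    _ ≤ r := hn
    _ ≤ q * r' := hrr'

lemma sum_coveringNumber_le_of_separated (hB : Bornology.IsBounded B) (hr : 0 < r) {ι : Type*}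
    (I : Finset ι) (A : ι → Set (Pt d)) (hAB : ∀ p ∈ I, A p ⊆ B)
    (hsep : (I : Set ι).Pairwise fun p q => ∀ x ∈ A p, ∀ y ∈ A q, 2 * r < dist x y) :
    ∑ p ∈ I, coveringNumber (A p) r ≤ coveringNumber B r := by
  classical
  obtain ⟨c, hc⟩ := exists_subset_iUnion_closedBall_coveringNumber hB hr
  let ballsMeeting : ι → Finset (Fin (coveringNumber B r)) := fun p =>
    {n | (closedBall (c n) r ∩ A p).Nonempty}
  have hdisjoint : (I : Set ι).PairwiseDisjoint ballsMeeting := by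
    intro p hp q hq hpq
    refine Finset.disjoint_left.2 fun n hnp hnq => ?_
    obtain ⟨x, hxc, hx⟩ := (Finset.mem_filter.1 hnp).2
    obtain ⟨y, hyc, hy⟩ := (Finset.mem_filter.1 hnq).2
    rw [mem_closedBall] at hxc hyc
    linarith [hsep hp hq hpq x hx y hy, dist_triangle_right x y (c n)]
  calc ∑ p ∈ I, coveringNumber (A p) r ≤ ∑ p ∈ I, (ballsMeeting p).card := by
        refine Finset.sum_le_sum fun p hp => coveringNumber_le_card _ c fun x hx => ?_
        obtain ⟨n, hn⟩ := mem_iUnion.1 (hc (hAB p hp hx))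
        exact mem_iUnion₂.2 ⟨n, Finset.mem_filter.2 ⟨Finset.mem_univ _, x, hn, hx⟩, hn⟩
    _ = (I.biUnion ballsMeeting).card := (Finset.card_biUnion hdisjoint).symm
    _ ≤ coveringNumber B r := by simpa using Finset.card_le_univ (I.biUnion ballsMeeting)

end CoveringNumber

namespace MWGraph

variable {d : ℕ} {V E : Type} [Fintype V] [Fintype E] (G : MWGraph d V E)

section Path

lemma pathRatio_cons (e : E) (γ : List E) : G.pathRatio (e :: γ) = G.r e * G.pathRatio γ := by
  simp only [pathRatio, List.map_cons, List.prod_cons]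

lemma pathRatio_append (γ η : List E) :
    G.pathRatio (γ ++ η) = G.pathRatio γ * G.pathRatio η := by
  simp only [pathRatio, List.map_append, List.prod_append]

lemma pathRatio_pos (γ : List E) : 0 < G.pathRatio γ :=
  List.prod_pos (by simpa using fun e _ => G.r_pos e)

lemma pathRatio_le_pow {R : ℝ} (hR0 : 0 ≤ R) (hR : ∀ e, G.r e ≤ R) (γ : List E) :
    G.pathRatio γ ≤ R ^ γ.length := by
  induction γ with
  | nil => simp [pathRatio]
  | cons e γ ih =>
    rw [pathRatio_cons, List.length_cons, pow_succ']
    exact mul_le_mul (hR e) ih (G.pathRatio_pos γ).le hR0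

lemma pathRatio_le_one (γ : List E) : G.pathRatio γ ≤ 1 := by
  simpa using G.pathRatio_le_pow zero_le_one (fun e => (G.r_lt_one e).le) γ

lemma pathRatio_antitone {γ η : List E} (h : γ <+: η) : G.pathRatio η ≤ G.pathRatio γ := by
  obtain ⟨τ, rfl⟩ := h
  rw [pathRatio_append]
  exact mul_le_of_le_one_right (G.pathRatio_pos γ).le (G.pathRatio_le_one τ)

lemma exists_lt_one_forall_r_le : ∃ R : ℝ, 0 ≤ R ∧ R < 1 ∧ ∀ e, G.r e ≤ R := by
  obtain ⟨ε, hε, hε1, h⟩ := exists_pos_le_one_forall_le fun e => sub_pos.2 (G.r_lt_one e)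
  exact ⟨1 - ε, sub_nonneg.2 hε1, sub_lt_self 1 hε, fun e => le_sub_comm.1 (h e)⟩

lemma dist_pathMap (γ : List E) (x y : Pt d) :
    dist (G.pathMap γ x) (G.pathMap γ y) = G.pathRatio γ * dist x y := by
  induction γ with
  | nil => simp [pathMap, pathRatio]
  | cons e γ ih => simp only [pathMap, Function.comp_apply, G.S_sim, ih, pathRatio_cons, mul_assoc]

lemma pathMap_append (γ η : List E) : G.pathMap (γ ++ η) = G.pathMap γ ∘ G.pathMap η := by
  induction γ with
  | nil => rfl
  | cons e γ ih => simp only [List.cons_append, pathMap, ih, Function.comp_assoc]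

lemma isPathFrom_append {v : V} {γ η : List E} :
    G.IsPathFrom v (γ ++ η) ↔ G.IsPathFrom v γ ∧ G.IsPathFrom (G.pathTerm v γ) η := by
  induction γ generalizing v with
  | nil => simp [IsPathFrom, pathTerm]
  | cons e γ ih => simp [IsPathFrom, pathTerm, ih, and_assoc]

lemma pathTerm_append (v : V) (γ η : List E) :
    G.pathTerm v (γ ++ η) = G.pathTerm (G.pathTerm v γ) η := by
  induction γ generalizing v with
  | nil => rfl
  | cons e γ ih => simp only [List.cons_append, pathTerm, ih]

lemma isHomeomorph_S (e : E) : IsHomeomorph (G.S e) :=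
  isHomeomorph_of_dist_eq_mul (G.r_pos e) (G.S_sim e)

lemma pathRatio_mul_lt_dist_of_notMem_image {A : Set (Pt d)} {γ : List E} {y z : Pt d} {δ : ℝ}
    (hy : closedBall y δ ⊆ A) (hz : z ∉ G.pathMap γ '' A) :
    G.pathRatio γ * δ < dist z (G.pathMap γ y) := by
  obtain ⟨z, rfl⟩ := surjective_of_dist_eq_mul (G.pathRatio_pos γ) (G.dist_pathMap γ) z
  rw [dist_pathMap]
  refine mul_lt_mul_of_pos_left (lt_of_not_ge fun h => hz ?_) (G.pathRatio_pos γ)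
  exact mem_image_of_mem _ (hy h)

end Path

section ForwardInvariant

/-- A family of sets is forward invariant if every edge map `S e` sends the set at the terminal
vertex of `e` into the set at its initial vertex. The attractors and the open sets of the open set
condition are the examples of interest. -/
def IsForwardInvariant (A : V → Set (Pt d)) : Prop :=
  ∀ e, MapsTo (G.S e) (A (G.term e)) (A (G.init e))

variable {G} {A B C U : V → Set (Pt d)}

lemma IsForwardInvariant.mapsTo_pathMap (hA : G.IsForwardInvariant A) {v : V} {γ : List E}
    (hγ : G.IsPathFrom v γ) : MapsTo (G.pathMap γ) (A (G.pathTerm v γ)) (A v) := by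
  induction γ generalizing v with
  | nil => exact mapsTo_id _
  | cons e γ ih =>
    obtain ⟨rfl, hγ⟩ := hγ
    exact (hA e).comp (ih hγ)

lemma IsForwardInvariant.closure (hA : G.IsForwardInvariant A) :
    G.IsForwardInvariant fun v => closure (A v) :=
  fun e => (hA e).closure (G.isHomeomorph_S e).continuous

lemma IsForwardInvariant.coveringNumber_le (hB : G.IsForwardInvariant B) {v : V} {γ : List E}
    (hγ : G.IsPathFrom v γ) (hBv : Bornology.IsBounded (B v)) {r : ℝ} (hr : 0 < r) :
    coveringNumber (B (G.pathTerm v γ)) (r / G.pathRatio γ) ≤ coveringNumber (B v) r :=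
  coveringNumber_le_of_mapsTo_of_dist_eq_mul (G.pathRatio_pos γ) (G.dist_pathMap γ)
    (hB.mapsTo_pathMap hγ) hBv hr (mul_div_cancel₀ r (G.pathRatio_pos γ).ne').ge

lemma IsInhomAttractor.isForwardInvariant (hB : G.IsInhomAttractor C B) :
    G.IsForwardInvariant B := by
  intro e x hx
  rw [hB.2.2 (G.init e)]
  exact Or.inl (mem_iUnion₂.2 ⟨e, rfl, mem_image_of_mem _ hx⟩)

lemma IsInhomAttractor.condensation_subset (hB : G.IsInhomAttractor C B) (v : V) : C v ⊆ B v := by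
  rw [hB.2.2 v]
  exact subset_union_right

lemma IsOSCWith.isForwardInvariant (hU : G.IsOSCWith U) : G.IsForwardInvariant U := fun _ _ hx =>
  hU.2.2.2.2.1 _ (mem_iUnion₂.2 ⟨_, rfl, mem_image_of_mem _ hx⟩)

end ForwardInvariant

section CondensationOSC

variable {G} {C U : V → Set (Pt d)}

lemma IsOSCWith.disjoint_image_closure (hU : G.IsOSCWith U) {e e' : E}
    (hinit : G.init e = G.init e') (hne : e ≠ e') :
    Disjoint (G.S e '' closure (U (G.term e))) (G.S e' '' U (G.term e')) :=
  ((hU.2.2.2.2.2 e e' hinit hne).closure_left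
    ((G.isHomeomorph_S e').isOpenMap _ (hU.2.1 _))).mono_left
    (image_closure_subset_closure_image (G.isHomeomorph_S e).continuous)

/- Strip the common prefix of `σ` and `η`. If `σ` is exhausted, `C` avoids the first-level images
of `U`; otherwise the two paths separate at distinct edges, where the images of `U` are disjoint. -/
lemma IsOSCWith.pathMap_notMem_image_of_not_prefix (hU : G.IsOSCWith U)
    (hCU : ∀ i, C i ⊆ closure (U i) \ ⋃ e ∈ {e : E | G.init e = i}, G.S e '' U (G.term e))
    {v : V} {σ η : List E} (hσ : G.IsPathFrom v σ) (hη : G.IsPathFrom v η) (hησ : ¬ η <+: σ)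
    {x : Pt d} (hx : x ∈ C (G.pathTerm v σ)) :
    G.pathMap σ x ∉ G.pathMap η '' U (G.pathTerm v η) := by
  induction σ generalizing v η with
  | nil =>
    cases η with
    | nil => exact absurd List.nil_prefix hησ
    | cons e η =>
      obtain ⟨rfl, hη⟩ := hη
      rintro ⟨y, hy, hyx⟩
      exact (hCU _ hx).2
        (mem_iUnion₂.2 ⟨e, rfl, _, hU.isForwardInvariant.mapsTo_pathMap hη hy, hyx⟩)
  | cons e σ ih =>
    cases η with
    | nil => exact absurd List.nil_prefix hησ
    | cons e' η =>
      obtain ⟨hv, hσ⟩ := hσ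
      obtain ⟨hv', hη⟩ := hη
      rintro ⟨y, hy, hyx⟩
      by_cases hee' : e = e'
      · subst hee'
        exact ih hσ hη (fun h => hησ (List.cons_prefix_cons.2 ⟨rfl, h⟩)) hx
          ⟨y, hy, (G.isHomeomorph_S e).injective hyx⟩
      · exact disjoint_left.1 (hU.disjoint_image_closure (hv.trans hv'.symm) hee')
          (mem_image_of_mem _ (hU.isForwardInvariant.closure.mapsTo_pathMap hσ (hCU _ hx).1))
          ⟨_, hU.isForwardInvariant.mapsTo_pathMap hη hy, hyx⟩

end CondensationOSC

section InnerPath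

/-- `ω` is a path from `v` to `i`, of ratio at least `δ`, whose cylinder set over `closure (U i)`
lies at depth `δ` inside `U v`. One constant bounds both quantities because only their minimum
matters for the scales at which cylinder sets are separated. -/
structure IsInnerPath (U : V → Set (Pt d)) (i : V) (δ : ℝ) (v : V) (ω : List E) : Prop where
  isPathFrom : G.IsPathFrom v ω
  pathTerm_eq : G.pathTerm v ω = i
  le_pathRatio : δ ≤ G.pathRatio ω
  closedBall_subset : ∀ x ∈ closure (U i), closedBall (G.pathMap ω x) δ ⊆ U v

variable {G} {A K U : V → Set (Pt d)}

lemma IsInnerPath.mono {i v : V} {δ δ' : ℝ} {ω : List E} (hω : G.IsInnerPath U i δ v ω)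
    (hδ : δ' ≤ δ) : G.IsInnerPath U i δ' v ω where
  isPathFrom := hω.isPathFrom
  pathTerm_eq := hω.pathTerm_eq
  le_pathRatio := hδ.trans hω.le_pathRatio
  closedBall_subset x hx := (closedBall_subset_closedBall hδ).trans (hω.closedBall_subset x hx)

lemma IsAttractor.exists_path_mem_image (hK : G.IsAttractor K) (n : ℕ) {v : V} {x : Pt d}
    (hx : x ∈ K v) : ∃ γ : List E, γ.length = n ∧ G.IsPathFrom v γ ∧
      x ∈ G.pathMap γ '' K (G.pathTerm v γ) := by
  induction n generalizing v x with
  | zero => exact ⟨[], rfl, trivial, x, hx, rfl⟩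
  | succ n ih =>
    rw [hK.2.2 v] at hx
    obtain ⟨e, rfl, y, hy, rfl⟩ := mem_iUnion₂.1 hx
    obtain ⟨γ, hlen, hγ, z, hz, rfl⟩ := ih hy
    exact ⟨e :: γ, by simp [hlen], ⟨rfl, hγ⟩, z, hz, rfl⟩

lemma IsAttractor.exists_path_forall_dist_lt (hK : G.IsAttractor K)
    (hA : ∀ w, Bornology.IsBounded (A w)) {v : V} {x : Pt d} (hx : x ∈ K v) {ε : ℝ} (hε : 0 < ε) :
    ∃ γ : List E, G.IsPathFrom v γ ∧ ∀ z ∈ A (G.pathTerm v γ), dist (G.pathMap γ z) x < ε := by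
  obtain ⟨D, hD, hdist⟩ : ∃ D > 0, ∀ w, ∀ y ∈ A w ∪ K w, ∀ z ∈ A w ∪ K w, dist y z ≤ D := by
    have hbounded : Bornology.IsBounded (⋃ w, (A w ∪ K w)) :=
      Bornology.isBounded_iUnion.2 fun w => (hA w).union (hK.1 w).isBounded
    refine ⟨diam (⋃ w, (A w ∪ K w)) + 1, by positivity, fun w y hy z hz => ?_⟩
    linarith [dist_le_diam_of_mem hbounded (mem_iUnion.2 ⟨w, hy⟩) (mem_iUnion.2 ⟨w, hz⟩)]
  obtain ⟨R, hR0, hR1, hR⟩ := G.exists_lt_one_forall_r_le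
  obtain ⟨n, hn⟩ := exists_pow_lt_of_lt_one (div_pos hε hD) hR1
  obtain ⟨γ, hlen, hγ, y, hy, rfl⟩ := hK.exists_path_mem_image n hx
  refine ⟨γ, hγ, fun z hz => ?_⟩
  calc dist (G.pathMap γ z) (G.pathMap γ y) = G.pathRatio γ * dist z y := G.dist_pathMap γ z y
    _ ≤ R ^ n * D := mul_le_mul (hlen ▸ G.pathRatio_le_pow hR0 hR γ)
        (hdist _ z (Or.inl hz) y (Or.inr hy)) dist_nonneg (pow_nonneg hR0 n)
    _ < ε := (lt_div_iff₀ hD).1 hn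

lemma exists_isInnerPath (hSC : G.StronglyConnected) (hK : G.IsAttractor K) (hU : G.IsOSCWith U)
    {v : V} (hUK : (U v ∩ K v).Nonempty) (i : V) :
    ∃ δ : ℝ, 0 < δ ∧ ∃ ω : List E, G.IsInnerPath U i δ v ω := by
  obtain ⟨x, hxU, hxK⟩ := hUK
  obtain ⟨ε, hε, hball⟩ := Metric.isOpen_iff.1 (hU.2.1 v) x hxU
  obtain ⟨γ, hγ, hclose⟩ :=
    hK.exists_path_forall_dist_lt (fun w => (hU.2.2.1 w).closure) hxK (half_pos hε)
  obtain ⟨η, -, hη, hηi⟩ := hSC (G.pathTerm v γ) i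
  refine ⟨min (ε / 2) (G.pathRatio (γ ++ η)), lt_min (half_pos hε) (G.pathRatio_pos _), γ ++ η,
    G.isPathFrom_append.2 ⟨hγ, hη⟩, by rw [pathTerm_append, hηi], min_le_right _ _,
    fun z hz w hw => hball ?_⟩
  have hηz : G.pathMap η z ∈ closure (U (G.pathTerm v γ)) :=
    hU.isForwardInvariant.closure.mapsTo_pathMap hη (by rwa [hηi])
  calc dist w x ≤ dist w (G.pathMap (γ ++ η) z) + dist (G.pathMap (γ ++ η) z) x :=
        dist_triangle _ _ _
    _ < ε / 2 + ε / 2 := add_lt_add_of_le_of_lt ((mem_closedBall.1 hw).trans (min_le_left _ _))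
        (by rw [pathMap_append]; exact hclose _ hηz)
    _ = ε := add_halves ε

lemma exists_forall_isInnerPath (hSC : G.StronglyConnected) (hK : G.IsAttractor K)
    (hU : G.IsOSCWith U) (hUK : ∀ v, (U v ∩ K v).Nonempty) (i : V) :
    ∃ (δ : ℝ) (ω : V → List E), 0 < δ ∧ ∀ v, G.IsInnerPath U i δ v (ω v) := by
  choose δ hδ ω hω using fun v => exists_isInnerPath hSC hK hU (hUK v) i
  obtain ⟨δ₀, hδ₀, -, hle⟩ := exists_pos_le_one_forall_le hδ
  exact ⟨δ₀, ω, hδ₀, fun v => (hω v).mono (hle v)⟩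

end InnerPath

section FirstPassage

/-- The paths from `v` whose ratio is at most `τ` while that of every proper prefix exceeds `τ`:
the cut set of the path tree at scale `τ`. -/
def firstPassage (v : V) (τ : ℝ) : Set (List E) :=
  {γ | G.IsPathFrom v γ ∧ G.pathRatio γ ≤ τ ∧ ∀ η, η <+: γ → η ≠ γ → τ < G.pathRatio η}

lemma scale_induction {P : V → ℝ → Prop} (base : ∀ v τ, 1 ≤ τ → P v τ)
    (step : ∀ v τ, 0 < τ → τ < 1 → (∀ e, G.init e = v → P (G.term e) (τ / G.r e)) → P v τ)
    (v : V) {τ : ℝ} (hτ : 0 < τ) : P v τ := by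
  obtain ⟨R, hR0, hR1, hR⟩ := G.exists_lt_one_forall_r_le
  obtain ⟨n, hn⟩ := exists_pow_lt_of_lt_one hτ hR1
  induction n generalizing v τ with
  | zero => exact base v τ (by simpa using hn.le)
  | succ n ih =>
    rcases le_or_gt 1 τ with h1 | h1
    · exact base v τ h1
    · refine step v τ hτ h1 fun e _ => ih _ (div_pos hτ (G.r_pos e)) ?_
      rw [lt_div_iff₀ (G.r_pos e)]
      exact (mul_le_mul_of_nonneg_left (hR e) (pow_nonneg hR0 n)).trans_lt (pow_succ R n ▸ hn)

variable {G} {v : V} {τ : ℝ}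

lemma firstPassage_of_one_le (hτ : 1 ≤ τ) : G.firstPassage v τ = {[]} := by
  ext γ
  refine ⟨fun hγ => ?_, ?_⟩
  · by_contra hne
    exact (hγ.2.2 [] List.nil_prefix (Ne.symm hne)).not_ge (by simpa [pathRatio] using hτ)
  · rintro rfl
    exact ⟨trivial, by simpa [pathRatio] using hτ, fun η hη hne => absurd (by simpa using hη) hne⟩

lemma nil_notMem_firstPassage (hτ : τ < 1) : [] ∉ G.firstPassage v τ :=
  fun h => hτ.not_ge (by simpa [pathRatio] using h.2.1)

lemma cons_mem_firstPassage (hτ : τ < 1) {e : E} {γ : List E} :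
    e :: γ ∈ G.firstPassage v τ ↔
      G.init e = v ∧ γ ∈ G.firstPassage (G.term e) (τ / G.r e) := by
  have hpre : (∀ η, η <+: e :: γ → η ≠ e :: γ → τ < G.pathRatio η) ↔
      ∀ η, η <+: γ → η ≠ γ → τ / G.r e < G.pathRatio η := by
    simp only [List.prefix_cons_iff, div_lt_iff₀' (G.r_pos e), ← pathRatio_cons]
    refine ⟨fun h η hη hne => h _ (Or.inr ⟨η, rfl, hη⟩) (by simpa using hne), ?_⟩
    rintro h _ (rfl | ⟨η, rfl, hη⟩) hne
    · simpa [pathRatio] using hτ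
    · exact h η hη (by simpa using hne)
  simp only [firstPassage, mem_ofPred_eq, IsPathFrom, hpre, pathRatio_cons,
    le_div_iff₀' (G.r_pos e), and_assoc]

lemma firstPassage_of_lt_one (hτ : τ < 1) : G.firstPassage v τ =
    ⋃ e ∈ {e | G.init e = v}, List.cons e '' G.firstPassage (G.term e) (τ / G.r e) := by
  ext γ
  cases γ with
  | nil => simp [nil_notMem_firstPassage hτ]
  | cons e γ => simp [cons_mem_firstPassage hτ, and_comm]

variable (G v) in
lemma finite_firstPassage (hτ : 0 < τ) : (G.firstPassage v τ).Finite := by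
  refine G.scale_induction (P := fun v τ => (G.firstPassage v τ).Finite) ?_ ?_ v hτ
  · intro v τ hτ1
    rw [firstPassage_of_one_le hτ1]
    exact finite_singleton _
  · intro v τ _ hτ1 ih
    rw [firstPassage_of_lt_one hτ1]
    exact (toFinite _).biUnion fun e he => (ih e he).image _

lemma eq_of_prefix_of_mem_firstPassage {γ η : List E} (hγ : γ ∈ G.firstPassage v τ)
    (hη : η ∈ G.firstPassage v τ) (h : η <+: γ) : η = γ := by
  by_contra hne
  exact (hγ.2.2 η h hne).not_ge hη.2.1

lemma mul_le_pathRatio_of_mem_firstPassage {b : ℝ} (hb : ∀ e, b ≤ G.r e) (hb1 : b ≤ 1)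
    (hτ : 0 < τ) (hτ1 : τ ≤ 1) {γ : List E} (hγ : γ ∈ G.firstPassage v τ) :
    b * τ ≤ G.pathRatio γ := by
  rcases List.eq_nil_or_concat' γ with rfl | ⟨η, e, rfl⟩
  · simpa [pathRatio] using (mul_le_of_le_one_left hτ.le hb1).trans hτ1
  · have hη : τ < G.pathRatio η := hγ.2.2 η (List.prefix_append _ _) (by simp)
    calc b * τ ≤ G.r e * G.pathRatio η :=
          mul_le_mul (hb e) hη.le hτ.le (G.r_pos e).le
      _ = G.pathRatio (η ++ [e]) := by
          rw [pathRatio_append, mul_comm]; simp [pathRatio]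

lemma ncard_firstPassage_of_lt_one [DecidableEq V] (hτ : 0 < τ) (hτ1 : τ < 1) :
    (G.firstPassage v τ).ncard =
      ∑ e with G.init e = v, (G.firstPassage (G.term e) (τ / G.r e)).ncard := by
  have hdisj : {e | G.init e = v}.PairwiseDisjoint fun e =>
      List.cons e '' G.firstPassage (G.term e) (τ / G.r e) := by
    refine fun e _ e' _ hne => disjoint_left.2 ?_
    rintro _ ⟨γ, -, rfl⟩ ⟨γ', -, h⟩
    exact hne (List.cons.inj h).1.symm
  rw [firstPassage_of_lt_one hτ1, (toFinite _).ncard_biUnion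
    (fun e _ => (G.finite_firstPassage _ (div_pos hτ (G.r_pos e))).image _) hdisj]
  simp only [ncard_image_of_injective _ List.cons_injective]
  rw [← finsum_mem_coe_finset, Finset.coe_filter_univ]

end FirstPassage

section PathCount

variable [DecidableEq V]

lemma Amatrix_nonneg (s : ℝ) (i j : V) : 0 ≤ G.Amatrix s i j :=
  Finset.sum_nonneg fun e _ => by
    split_ifs
    exacts [Real.rpow_nonneg (G.r_pos e).le s, le_rfl]

lemma Amatrix_mulVec_apply (s : ℝ) (h : V → ℝ) (v : V) :
    (G.Amatrix s).mulVec h v = ∑ e with G.init e = v, G.r e ^ s * h (G.term e) := by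
  simp only [Matrix.mulVec, dotProduct, Amatrix, Matrix.of_apply, Finset.sum_mul,
    Finset.sum_filter]
  rw [Finset.sum_comm]
  refine Finset.sum_congr rfl fun e _ => ?_
  simp [ite_and]

variable {G} {s b c : ℝ} {h : V → ℝ}

lemma mul_le_ncard_firstPassage_mul_rpow (hle : h ≤ (G.Amatrix s).mulVec h) (hb0 : 0 < b)
    (hb1 : b ≤ 1) (hb : ∀ e, b ≤ G.r e) (hc0 : 0 ≤ c) (hc : ∀ v, c * h v ≤ b ^ |s|) (v : V)
    {τ : ℝ} (hτ : 0 < τ) (hbτ : b * τ ≤ 1) :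
    c * h v ≤ (G.firstPassage v τ).ncard * τ ^ s := by
  refine G.scale_induction (P := fun v τ =>
    b * τ ≤ 1 → c * h v ≤ (G.firstPassage v τ).ncard * τ ^ s) ?_ ?_ v hτ hbτ
  · intro v τ hτ1 hbτ
    have hbs : b ^ |s| * 1 ^ s ≤ τ ^ s := rpow_abs_mul_rpow_le_rpow hb0 one_pos
      (one_pos.trans_le hτ1) ((mul_one b).trans_le (hb1.trans hτ1)) hbτ s
    rw [Real.one_rpow, mul_one] at hbs
    simpa only [firstPassage_of_one_le hτ1, ncard_singleton, Nat.cast_one, one_mul]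
      using (hc v).trans hbs
  · intro v τ hτ hτ1 ih _
    have hterm : ∀ e ∈ ({e | G.init e = v} : Finset E), G.r e ^ s * (c * h (G.term e)) ≤
        (G.firstPassage (G.term e) (τ / G.r e)).ncard * τ ^ s := by
      intro e he
      have hscale : b * (τ / G.r e) ≤ 1 := by
        rw [← mul_div_assoc, div_le_one (G.r_pos e)]
        exact (mul_le_of_le_one_right hb0.le hτ1.le).trans (hb e)
      have hrs : 0 < G.r e ^ s := Real.rpow_pos_of_pos (G.r_pos e) s
      have hcount := ih e (by simpa using he) hscale
      rwa [Real.div_rpow hτ.le (G.r_pos e).le, ← mul_div_assoc, le_div_iff₀' hrs] at hcount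
    calc c * h v ≤ c * (G.Amatrix s).mulVec h v := mul_le_mul_of_nonneg_left (hle v) hc0
      _ = ∑ e with G.init e = v, G.r e ^ s * (c * h (G.term e)) := by
        simp only [Amatrix_mulVec_apply, Finset.mul_sum, mul_left_comm]
      _ ≤ ∑ e with G.init e = v, ((G.firstPassage (G.term e) (τ / G.r e)).ncard : ℝ) * τ ^ s :=
        Finset.sum_le_sum hterm
      _ = (G.firstPassage v τ).ncard * τ ^ s := by
        rw [← Finset.sum_mul, ← Nat.cast_sum, ncard_firstPassage_of_lt_one hτ hτ1]

lemma exists_pos_le_ncard_firstPassage_mul_rpow (hle : h ≤ (G.Amatrix s).mulVec h) {v : V}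
    (hv : 0 < h v) : ∃ c : ℝ, 0 < c ∧
      ∀ τ, 0 < τ → τ ≤ 1 → c ≤ (G.firstPassage v τ).ncard * τ ^ s := by
  obtain ⟨b, hb0, hb1, hb⟩ := exists_pos_le_one_forall_le G.r_pos
  have hpos : ∀ w, 0 < 1 + |h w| := fun w => by positivity
  obtain ⟨c, hc0, -, hc⟩ := exists_pos_le_one_forall_le fun w =>
    div_pos (Real.rpow_pos_of_pos hb0 |s|) (hpos w)
  refine ⟨c * h v, mul_pos hc0 hv, fun τ hτ hτ1 => mul_le_ncard_firstPassage_mul_rpow hle hb0 hb1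
    hb hc0.le (fun w => ?_) v hτ (mul_le_one₀ hb1 hτ.le hτ1)⟩
  calc c * h w ≤ c * (1 + |h w|) :=
        mul_le_mul_of_nonneg_left ((le_abs_self _).trans (le_add_of_nonneg_left zero_le_one)) hc0.le
    _ ≤ b ^ |s| := (le_div_iff₀ (hpos w)).1 (hc w)

end PathCount

section Separation

variable {G} {C U : V → Set (Pt d)} {i v : V} {ρ δ : ℝ}

variable (G) in
lemma exists_forall_pow_le_pathRatio_mul (hδ : 0 < δ) : ∃ ρ : ℝ, 0 < ρ ∧ ρ < 1 ∧
    ∀ v (m : ℕ), ∀ γ ∈ G.firstPassage v (ρ ^ m), 2 * ρ ^ (m + 1) ≤ G.pathRatio γ * δ := by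
  obtain ⟨b, hb0, hb1, hb⟩ := exists_pos_le_one_forall_le G.r_pos
  have hρ0 : 0 < b * min δ 1 / 2 := by positivity
  have hρ1 : b * min δ 1 / 2 < 1 := by
    linarith [mul_le_one₀ hb1 (lt_min hδ one_pos).le (min_le_right δ 1)]
  refine ⟨b * min δ 1 / 2, hρ0, hρ1, fun v m γ hγ => ?_⟩
  have hγb := mul_le_pathRatio_of_mem_firstPassage hb hb1 (pow_pos hρ0 m)
    (pow_le_one₀ hρ0.le hρ1.le) hγ
  calc 2 * (b * min δ 1 / 2) ^ (m + 1) = b * (b * min δ 1 / 2) ^ m * min δ 1 := by ring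
    _ ≤ G.pathRatio γ * δ :=
      mul_le_mul hγb (min_le_left δ 1) (lt_min hδ one_pos).le (G.pathRatio_pos γ).le

/- A path of a later generation that is a prefix of `γ ++ ω` would have ratio at least `δ r_γ`,
which is too large; within one generation the first-passage paths form an antichain. -/
lemma not_prefix_append_of_mem_firstPassage (hρ0 : 0 < ρ) (hρ1 : ρ < 1) {m m' : ℕ} (hm : m ≤ m')
    {γ η ω : List E} (hγρ : 2 * ρ ^ (m + 1) ≤ G.pathRatio γ * δ)
    (hγ : γ ∈ G.firstPassage v (ρ ^ m)) (hη : η ∈ G.firstPassage v (ρ ^ m'))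
    (hω : δ ≤ G.pathRatio ω) (hne : m = m' → γ ≠ η) : ¬ η <+: γ ++ ω := by
  intro h
  rcases hm.eq_or_lt with rfl | hlt
  · rcases List.prefix_or_prefix_of_prefix h (List.prefix_append γ ω) with hηγ | hγη
    · exact hne rfl (eq_of_prefix_of_mem_firstPassage hγ hη hηγ).symm
    · exact hne rfl (eq_of_prefix_of_mem_firstPassage hη hγ hγη)
  · have hcontra : 2 * ρ ^ (m + 1) ≤ ρ ^ (m + 1) := calc
      2 * ρ ^ (m + 1) ≤ G.pathRatio γ * G.pathRatio ω :=
        hγρ.trans (mul_le_mul_of_nonneg_left hω (G.pathRatio_pos γ).le)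
      _ = G.pathRatio (γ ++ ω) := (G.pathRatio_append γ ω).symm
      _ ≤ G.pathRatio η := G.pathRatio_antitone h
      _ ≤ ρ ^ m' := hη.2.1
      _ ≤ ρ ^ (m + 1) := pow_le_pow_of_le_one hρ0.le hρ1.le hlt
    linarith [pow_pos hρ0 (m + 1)]

lemma IsOSCWith.pathRatio_mul_lt_dist_pathMap_append (hU : G.IsOSCWith U)
    (hCU : ∀ i, C i ⊆ closure (U i) \ ⋃ e ∈ {e : E | G.init e = i}, G.S e '' U (G.term e))
    {γ η ω ω' : List E} (hγ : G.IsPathFrom v γ) (hη : G.IsPathFrom v η)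
    (hω : G.IsInnerPath U i δ (G.pathTerm v γ) ω) (hω' : G.IsInnerPath U i δ (G.pathTerm v η) ω')
    (hpre : ¬ η <+: γ ++ ω) {x y : Pt d} (hx : x ∈ C i) (hy : y ∈ C i) :
    G.pathRatio η * δ < dist (G.pathMap (γ ++ ω) x) (G.pathMap (η ++ ω') y) := by
  rw [G.pathMap_append η ω']
  refine G.pathRatio_mul_lt_dist_of_notMem_image (hω'.closedBall_subset y (hCU i hy).1) ?_
  refine hU.pathMap_notMem_image_of_not_prefix hCU (G.isPathFrom_append.2 ⟨hγ, hω.isPathFrom⟩)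
    hη hpre ?_
  rwa [pathTerm_append, hω.pathTerm_eq]

lemma IsOSCWith.two_mul_pow_lt_dist_pathMap_append (hU : G.IsOSCWith U)
    (hCU : ∀ i, C i ⊆ closure (U i) \ ⋃ e ∈ {e : E | G.init e = i}, G.S e '' U (G.term e))
    {ω : V → List E} (hω : ∀ v, G.IsInnerPath U i δ v (ω v)) (hρ0 : 0 < ρ) (hρ1 : ρ < 1)
    (hρ : ∀ m : ℕ, ∀ γ ∈ G.firstPassage v (ρ ^ m), 2 * ρ ^ (m + 1) ≤ G.pathRatio γ * δ)
    {k m m' : ℕ} (hmk : m ≤ k) (hmk' : m' ≤ k) {γ η : List E} (hγ : γ ∈ G.firstPassage v (ρ ^ m))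
    (hη : η ∈ G.firstPassage v (ρ ^ m')) (hne : m = m' → γ ≠ η) {x y : Pt d} (hx : x ∈ C i)
    (hy : y ∈ C i) :
    2 * ρ ^ (k + 1) <
      dist (G.pathMap (γ ++ ω (G.pathTerm v γ)) x) (G.pathMap (η ++ ω (G.pathTerm v η)) y) := by
  wlog hm : m ≤ m' generalizing m m' γ η x y
  · rw [dist_comm]
    exact this hmk' hmk hη hγ (fun h => (hne h.symm).symm) hy hx (le_of_not_ge hm)
  · calc 2 * ρ ^ (k + 1) ≤ 2 * ρ ^ (m' + 1) := mul_le_mul_of_nonneg_left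
          (pow_le_pow_of_le_one hρ0.le hρ1.le (Nat.succ_le_succ hmk')) zero_le_two
      _ ≤ G.pathRatio η * δ := hρ m' η hη
      _ < _ := hU.pathRatio_mul_lt_dist_pathMap_append hCU hγ.1 hη.1 (hω _) (hω _)
          (not_prefix_append_of_mem_firstPassage hρ0 hρ1 hm (hρ m γ hγ) hγ hη
            (hω _).le_pathRatio hne) hx hy

end Separation

section Counting

variable {G} {B C U : V → Set (Pt d)} {i v : V} {ρ δ r : ℝ}

lemma coveringNumber_le_coveringNumber_image_pathMap_append {A : Set (Pt d)} {γ ω : List E}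
    (hA : Bornology.IsBounded (G.pathMap (γ ++ ω) '' A)) (hρ0 : 0 < ρ) {k m : ℕ} (hmk : m ≤ k)
    (hr : 0 < r) (hrk : r ≤ ρ ^ (k + 1)) (hγ : 2 * ρ ^ (m + 1) ≤ G.pathRatio γ * δ)
    (hω : δ ≤ G.pathRatio ω) :
    coveringNumber A (ρ ^ (k - m)) ≤ coveringNumber (G.pathMap (γ ++ ω) '' A) r := by
  refine coveringNumber_le_of_mapsTo_of_dist_eq_mul (G.pathRatio_pos _) (G.dist_pathMap _)
    (mapsTo_image _ _) hA hr ?_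
  have hratio : ρ ^ (m + 1) ≤ G.pathRatio (γ ++ ω) := calc
    ρ ^ (m + 1) ≤ G.pathRatio γ * δ := by linarith [pow_pos hρ0 (m + 1)]
    _ ≤ G.pathRatio γ * G.pathRatio ω := mul_le_mul_of_nonneg_left hω (G.pathRatio_pos γ).le
    _ = G.pathRatio (γ ++ ω) := (G.pathRatio_append γ ω).symm
  calc r ≤ ρ ^ (k + 1) := hrk
    _ = ρ ^ (m + 1) * ρ ^ (k - m) := by rw [← pow_add]; congr 1; lia
    _ ≤ G.pathRatio (γ ++ ω) * ρ ^ (k - m) :=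
      mul_le_mul_of_nonneg_right hratio (pow_nonneg hρ0.le _)

lemma IsOSCWith.sum_ncard_mul_coveringNumber_le (hU : G.IsOSCWith U)
    (hCU : ∀ i, C i ⊆ closure (U i) \ ⋃ e ∈ {e : E | G.init e = i}, G.S e '' U (G.term e))
    (hB : G.IsForwardInvariant B) (hBv : Bornology.IsBounded (B v)) (hCB : C i ⊆ B i)
    {ω : V → List E} (hω : ∀ v, G.IsInnerPath U i δ v (ω v)) (hρ0 : 0 < ρ) (hρ1 : ρ < 1)
    (hρ : ∀ m : ℕ, ∀ γ ∈ G.firstPassage v (ρ ^ m), 2 * ρ ^ (m + 1) ≤ G.pathRatio γ * δ)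
    {k : ℕ} (hr : 0 < r) (hrk : r ≤ ρ ^ (k + 1)) :
    ∑ m ∈ Finset.range (k + 1),
      (G.firstPassage v (ρ ^ m)).ncard * coveringNumber (C i) (ρ ^ (k - m)) ≤
        coveringNumber (B v) r := by
  let paths : ℕ → Finset (List E) := fun m =>
    (G.finite_firstPassage v (pow_pos hρ0 m)).toFinset
  let I : Finset (Σ _ : ℕ, List E) := (Finset.range (k + 1)).sigma paths
  let copy : (Σ _ : ℕ, List E) → Set (Pt d) := fun p =>
    G.pathMap (p.2 ++ ω (G.pathTerm v p.2)) '' C i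
  have hI : ∀ p ∈ I, p.1 ≤ k ∧ p.2 ∈ G.firstPassage v (ρ ^ p.1) := by
    simp [I, paths]
  have hcopy : ∀ p ∈ I, copy p ⊆ B v := by
    refine fun p hp => ((hB.mapsTo_pathMap (G.isPathFrom_append.2
      ⟨(hI p hp).2.1, (hω _).isPathFrom⟩)).mono_left ?_).image_subset
    rwa [pathTerm_append, (hω _).pathTerm_eq]
  have hsep : (I : Set (Σ _ : ℕ, List E)).Pairwise fun p q =>
      ∀ x ∈ copy p, ∀ y ∈ copy q, 2 * r < dist x y := by
    rintro ⟨m, γ⟩ hp ⟨m', η⟩ hq hpq _ ⟨x, hx, rfl⟩ _ ⟨y, hy, rfl⟩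
    refine (mul_le_mul_of_nonneg_left hrk zero_le_two).trans_lt
      (hU.two_mul_pow_lt_dist_pathMap_append hCU hω hρ0 hρ1 hρ (hI _ hp).1 (hI _ hq).1
        (hI _ hp).2 (hI _ hq).2 ?_ hx hy)
    rintro rfl rfl
    exact hpq rfl
  calc ∑ m ∈ Finset.range (k + 1),
        (G.firstPassage v (ρ ^ m)).ncard * coveringNumber (C i) (ρ ^ (k - m))
      = ∑ p ∈ I, coveringNumber (C i) (ρ ^ (k - p.1)) := by
        simp [I, paths, Finset.sum_sigma, ncard_eq_toFinset_card _
          (G.finite_firstPassage v (pow_pos hρ0 _))]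
    _ ≤ ∑ p ∈ I, coveringNumber (copy p) r := Finset.sum_le_sum fun p hp =>
        coveringNumber_le_coveringNumber_image_pathMap_append (hBv.subset (hcopy p hp)) hρ0
          (hI p hp).1 hr hrk (hρ _ _ (hI p hp).2) (hω _).le_pathRatio
    _ ≤ coveringNumber (B v) r := sum_coveringNumber_le_of_separated hBv hr I copy hcopy hsep

lemma IsOSCWith.exists_mul_sum_le_of_le_mulVec [DecidableEq V] (hU : G.IsOSCWith U)
    (hCU : ∀ i, C i ⊆ closure (U i) \ ⋃ e ∈ {e : E | G.init e = i}, G.S e '' U (G.term e))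
    (hB : G.IsForwardInvariant B) (hBv : Bornology.IsBounded (B v)) (hCB : C i ⊆ B i)
    (hδ : 0 < δ) {ω : V → List E} (hω : ∀ v, G.IsInnerPath U i δ v (ω v)) {s : ℝ} {h : V → ℝ}
    (hle : h ≤ (G.Amatrix s).mulVec h) (hv : 0 < h v) :
    ∃ c ρ : ℝ, 0 < c ∧ 0 < ρ ∧ ρ < 1 ∧ ∀ (k : ℕ) (r : ℝ), 0 < r → r ≤ ρ ^ (k + 1) →
      c * ∑ ℓ ∈ Finset.range (k + 1), (ρ ^ s) ^ ℓ * coveringNumber (C i) (ρ ^ ℓ) ≤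
        (ρ ^ s) ^ k * coveringNumber (B v) r := by
  obtain ⟨ρ, hρ0, hρ1, hρ⟩ := G.exists_forall_pow_le_pathRatio_mul hδ
  obtain ⟨c, hc0, hc⟩ := exists_pos_le_ncard_firstPassage_mul_rpow hle hv
  have hρs : 0 < ρ ^ s := Real.rpow_pos_of_pos hρ0 s
  have hcount (m : ℕ) : c ≤ (G.firstPassage v (ρ ^ m)).ncard * (ρ ^ s) ^ m := by
    rw [Real.rpow_pow_comm hρ0.le]
    exact hc _ (pow_pos hρ0 m) (pow_le_one₀ hρ0.le hρ1.le)
  refine ⟨c, ρ, hc0, hρ0, hρ1, fun k r hr hrk => ?_⟩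
  calc c * ∑ ℓ ∈ Finset.range (k + 1), (ρ ^ s) ^ ℓ * coveringNumber (C i) (ρ ^ ℓ)
      ≤ (ρ ^ s) ^ k * ∑ m ∈ Finset.range (k + 1), ((G.firstPassage v (ρ ^ m)).ncard : ℝ) *
          coveringNumber (C i) (ρ ^ (k - m)) :=
        mul_sum_pow_mul_le_pow_mul_sum (N := fun ℓ => coveringNumber (C i) (ρ ^ ℓ)) hρs.le
          (fun ℓ => Nat.cast_nonneg _) hcount k
    _ ≤ (ρ ^ s) ^ k * coveringNumber (B v) r := by
        gcongr
        exact_mod_cast hU.sum_ncard_mul_coveringNumber_le hCU hB hBv hCB hω hρ0 hρ1 (hρ v) hr hrk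

end Counting

end MWGraph

theorem stmt17_general {d : ℕ} {V E : Type} [Fintype V] [Fintype E] [DecidableEq V]
    (G : MWGraph d V E) (hSC : G.StronglyConnected) {B C K U : V → Set (Pt d)}
    (hK : G.IsAttractor K) (hB : ∀ v, Bornology.IsBounded (B v)) (hBinv : G.IsForwardInvariant B)
    (hCB : ∀ v, C v ⊆ B v) (hU : G.IsOSCWith U) (hUK : ∀ v, (U v ∩ K v).Nonempty)
    (hCU : ∀ i, C i ⊆ closure (U i) \ ⋃ e ∈ {e : E | G.init e = i}, G.S e '' U (G.term e))
    {s : ℝ} (hs : 1 ≤ matrixSpectralRadius (G.Amatrix s)) (i j : V) :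
    ∃ c a ρ : ℝ, 0 < c ∧ 0 < a ∧ 0 < ρ ∧ ρ < 1 ∧ ∀ (k : ℕ) (r : ℝ),
      a * ρ ^ (k + 1) ≤ r → r < a * ρ ^ k →
        c * ∑ ℓ ∈ Finset.range (k + 1), ρ ^ ((ℓ : ℝ) * s) * (coveringNumber (C i) (ρ ^ ℓ) : ℝ) ≤
          r ^ s * (coveringNumber (B j) r : ℝ) := by
  obtain ⟨h, hpos, hle⟩ := exists_pos_le_mulVec (G.Amatrix_nonneg s) hs
  obtain ⟨-, v, hv⟩ := Pi.lt_def.1 hpos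
  obtain ⟨δ, ω, hδ, hω⟩ := MWGraph.exists_forall_isInnerPath hSC hK hU hUK i
  obtain ⟨c, ρ, hc, hρ0, hρ1, H⟩ :=
    hU.exists_mul_sum_le_of_le_mulVec hCU hBinv (hB v) (hCB i) hδ hω hle hv
  obtain ⟨π, -, hπ, rfl⟩ := hSC j v
  have hq := G.pathRatio_pos π
  have ha : 0 < G.pathRatio π * ρ := mul_pos hq hρ0
  have hcoef : 0 < ρ ^ |s| * (G.pathRatio π * ρ) ^ s := by positivity
  refine ⟨_, _, ρ, mul_pos hcoef hc, ha, hρ0, hρ1, fun k r hlow hup => ?_⟩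
  have hr : 0 < r := (mul_pos ha (pow_pos hρ0 _)).trans_le hlow
  have hrπ : r / G.pathRatio π ≤ ρ ^ (k + 1) := by
    rw [div_le_iff₀' hq, pow_succ', ← mul_assoc]
    exact hup.le
  have hNπ := hBinv.coveringNumber_le hπ (hB j) hr
  calc _ = ρ ^ |s| * (G.pathRatio π * ρ) ^ s *
        (c * ∑ ℓ ∈ Finset.range (k + 1), (ρ ^ s) ^ ℓ * (coveringNumber (C i) (ρ ^ ℓ) : ℝ)) := by
        simp only [mul_comm _ s, Real.rpow_mul_natCast hρ0.le, mul_assoc]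
    _ ≤ ρ ^ |s| * (G.pathRatio π * ρ) ^ s * ((ρ ^ s) ^ k * coveringNumber (B j) r) :=
        mul_le_mul_of_nonneg_left ((H k _ (div_pos hr hq) hrπ).trans (by gcongr)) hcoef.le
    _ = ρ ^ |s| * (G.pathRatio π * ρ) ^ s * (ρ ^ s) ^ k * coveringNumber (B j) r :=
        (mul_assoc _ _ _).symm
    _ ≤ r ^ s * coveringNumber (B j) r := mul_le_mul_of_nonneg_right
        (rpow_abs_mul_rpow_mul_rpow_pow_le_rpow ha hρ0 hρ1 hlow hup s) (Nat.cast_nonneg _)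

theorem stmt17 {d : ℕ} {V E : Type} [Fintype V] [Fintype E] [DecidableEq V]
    (G : MWGraph d V E) (hSC : G.StronglyConnected)
    (C K KC U : V → Set (Pt d))
    (hC : G.IsCondensation C) (hK : G.IsAttractor K) (hKC : G.IsInhomAttractor C KC)
    (hU : G.IsOSCWith U) (hUK : ∀ i, (U i ∩ K i).Nonempty)
    (hCU : ∀ i, C i ⊆ closure (U i) \ ⋃ e ∈ {e : E | G.init e = i}, G.S e '' U (G.term e))
    (s0 : ℝ) (hs0 : IsS0 G s0)
 :
    ∀ i j : V, ∃ c a ρ : ℝ, 0 < c ∧ 0 < a ∧ 0 < ρ ∧ ρ < 1 ∧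
      ∀ (k : ℕ) (t : ℝ), 0 < t → a * ρ ^ (k + 1) ≤ Real.exp (-t) →
        Real.exp (-t) < a * ρ ^ k →
          c * ∑ ℓ ∈ Finset.range (k + 1),
              ρ ^ ((ℓ : ℝ) * s0) * (coveringNumber (C i) (ρ ^ ℓ) : ℝ) ≤
            Real.exp (-s0 * t) * (coveringNumber (KC j) (Real.exp (-t)) : ℝ) := by
  intro i j
  obtain ⟨c, a, ρ, hc, ha, hρ0, hρ1, H⟩ := stmt17_general G hSC hK (fun v => (hKC.1 v).isBounded)
    hKC.isForwardInvariant hKC.condensation_subset hU hUK hCU hs0.2.ge i j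
  exact ⟨c, a, ρ, hc, ha, hρ0, hρ1, fun k t _ hlow hup => by
    simpa only [← Real.exp_mul, neg_mul_comm, mul_comm t] using H k (Real.exp (-t)) hlow hup⟩
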